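/- For all ε₀* > 0 and C* > 0 there exist constants C̃₄ > 0, C̃₅ > 0 and δ₀ > 0, depending only on ε₀* and C*, with the following property. Let N ≥ 1 (h = 1/N), let 0 < Δt ≤ δ₀, and let N̂^{m+1}, N̂^m, n^{m+1}, n^m be periodic grid functions with ε₀* ≤ N̂^{m+1}(i,j,k) ≤ C* and ε₀* ≤ N̂^m(i,j,k) ≤ C* for all (i,j,k), ε₀*/2 ≤ n^m(i,j,k) ≤ C* + 1 for all (i,j,k), 0 < n^{m+1}(i,j,k) < 2C* + 1 for all (i,j,k), and ‖N̂^m − n^m‖_∞ ≤ Δt². Set ñ^{m+1} = N̂^{m+1} − n^{m+1} and ñ^m = N̂^m − n^m. Then ⟨ñ^{m+1}, G¹_{N̂^m}(N̂^{m+1}) − G¹_{n^m}(n^{m+1})⟩ + Δt·⟨ñ^{m+1}, (ln N̂^{m+1} − ln n^{m+1}) − (ln N̂^m − ln n^m)⟩ ≥ C̃₅·‖ñ^{m+1}‖₂² − C̃₄·‖ñ^m‖₂². -/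

import Mathlib

open scoped BigOperators

/-- The periodic grid of indices: `(ZMod N)^3`. -/
abbrev GridIdx (N : ℕ) := ZMod N × ZMod N × ZMod N

namespace PNP

/-- Shift the first index by `a`. -/
def xsh {N : ℕ} (p : GridIdx N) (a : ZMod N) : GridIdx N := (p.1 + a, p.2.1, p.2.2)
/-- Shift the second index by `a`. -/
def ysh {N : ℕ} (p : GridIdx N) (a : ZMod N) : GridIdx N := (p.1, p.2.1 + a, p.2.2)
/-- Shift the third index by `a`. -/
def zsh {N : ℕ} (p : GridIdx N) (a : ZMod N) : GridIdx N := (p.1, p.2.1, p.2.2 + a)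

/-- Forward difference in `x`: `(D_x f)(p) = (f(p + e_x) - f(p)) / h` with `h = 1/N`. -/
noncomputable def Dx (N : ℕ) (f : GridIdx N → ℝ) : GridIdx N → ℝ :=
  fun p => (f (xsh p 1) - f p) * N
/-- Forward difference in `y`. -/
noncomputable def Dy (N : ℕ) (f : GridIdx N → ℝ) : GridIdx N → ℝ :=
  fun p => (f (ysh p 1) - f p) * N
/-- Forward difference in `z`. -/
noncomputable def Dz (N : ℕ) (f : GridIdx N → ℝ) : GridIdx N → ℝ :=
  fun p => (f (zsh p 1) - f p) * N

/-- Backward difference in `x`: `(d_x f)(p) = (f(p) - f(p - e_x)) / h`. -/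
noncomputable def dxm (N : ℕ) (f : GridIdx N → ℝ) : GridIdx N → ℝ :=
  fun p => (f p - f (xsh p (-1))) * N
/-- Backward difference in `y`. -/
noncomputable def dym (N : ℕ) (f : GridIdx N → ℝ) : GridIdx N → ℝ :=
  fun p => (f p - f (ysh p (-1))) * N
/-- Backward difference in `z`. -/
noncomputable def dzm (N : ℕ) (f : GridIdx N → ℝ) : GridIdx N → ℝ :=
  fun p => (f p - f (zsh p (-1))) * N

/-- Forward average in `x`: `(A_x f)(p) = (f(p + e_x) + f(p)) / 2`. -/
noncomputable def Ax (N : ℕ) (f : GridIdx N → ℝ) : GridIdx N → ℝ :=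
  fun p => (f (xsh p 1) + f p) / 2
/-- Forward average in `y`. -/
noncomputable def Ay (N : ℕ) (f : GridIdx N → ℝ) : GridIdx N → ℝ :=
  fun p => (f (ysh p 1) + f p) / 2
/-- Forward average in `z`. -/
noncomputable def Az (N : ℕ) (f : GridIdx N → ℝ) : GridIdx N → ℝ :=
  fun p => (f (zsh p 1) + f p) / 2

/-- The discrete Laplacian `Δ_h f = d_x(D_x f) + d_y(D_y f) + d_z(D_z f)`. -/
noncomputable def lap (N : ℕ) (f : GridIdx N → ℝ) : GridIdx N → ℝ :=
  fun p => dxm N (Dx N f) p + dym N (Dy N f) p + dzm N (Dz N f) p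

/-- The discrete inner product `⟨f, g⟩ = h³ ∑ f·g` with `h = 1/N`. -/
noncomputable def ip (N : ℕ) [NeZero N] (f g : GridIdx N → ℝ) : ℝ :=
  ((1 : ℝ) / N) ^ 3 * ∑ p : GridIdx N, f p * g p

/-- The discrete `L²` norm `‖f‖₂ = ⟨f, f⟩^{1/2}`. -/
noncomputable def l2 (N : ℕ) [NeZero N] (f : GridIdx N → ℝ) : ℝ :=
  Real.sqrt (ip N f f)

/-- The discrete maximum norm `‖f‖_∞ = max |f|`. -/
noncomputable def linf (N : ℕ) [NeZero N] (f : GridIdx N → ℝ) : ℝ :=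
  ⨆ p : GridIdx N, |f p|

/-- A grid function has zero mean if its values sum to zero. -/
def zeroMean (N : ℕ) [NeZero N] (f : GridIdx N → ℝ) : Prop :=
  ∑ p : GridIdx N, f p = 0

/-- With `F(x) = x·ln x`, the difference quotient `G¹_a(x) = (F(x) - F(a))/(x - a)`
for `x ≠ a`, with value `F'(a) = ln a + 1` at `x = a`. -/
noncomputable def G1 (a x : ℝ) : ℝ :=
  if x = a then Real.log a + 1
  else (x * Real.log x - a * Real.log a) / (x - a)

end PNP

open PNP

/-!
The inequality holds at each grid point. Write `x`, `y`, `a`, `b` for the values of `N̂^{m+1}`,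
`n^{m+1}`, `N̂^m`, `n^m` there; all four but `a` are at most some `M`, and all but `y` are at least
some `m > 0`. With `F(z) = z ln z`, the value `G¹_a(x)` is the average of `F' = ln + 1` over the
segment from `a` to `x`. On `(0, M]` the function `F'` increases at rate at least `1 / M`, so
`G¹_b` increases at rate at least `1 / (2 M)`; on `[m, ∞)` it is `1 / m`-Lipschitz, so
`a ↦ G¹_a(x)` is `1 / (2 m)`-Lipschitz. Two different sets are needed because `y` may be arbitrarily
close to `0`, where `ln` is not Lipschitz. Splitting
`G¹_a(x) - G¹_b(y) = (G¹_a(x) - G¹_b(x)) + (G¹_b(x) - G¹_b(y))` and bounding the logarithmic term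
in the same way leaves cross terms `|x - y| |a - b|`, which Young's inequality absorbs.
-/

section DifferenceQuotient

open scoped NNReal

section Segment

variable {E F : Type*} [AddCommGroup E] [Module ℝ E] [TopologicalSpace E] [ContinuousAdd E]
  [ContinuousSMul ℝ E] [TopologicalSpace F] {f : E → F} {s : Set E} {a x : E}

theorem continuousOn_comp_add_smul_sub (hs : Convex ℝ s) (hf : ContinuousOn f s)
    (ha : a ∈ s) (hx : x ∈ s) :
    ContinuousOn (fun t : ℝ ↦ f (a + t • (x - a))) (Set.Icc 0 1) :=
  hf.comp (by fun_prop) fun _ ht ↦ hs.add_smul_sub_mem ha hx ht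

end Segment

section RCLike

variable {𝕜 E : Type*} [RCLike 𝕜] [NormedAddCommGroup E] [NormedSpace ℝ E] [NormedSpace 𝕜 E]
  [IsScalarTower ℝ 𝕜 E] [CompleteSpace E] {f f' : 𝕜 → E} {s : Set 𝕜} {a b x : 𝕜} {K : ℝ≥0}

theorem dslope_eq_integral (hs : Convex ℝ s) (hf : ∀ z ∈ s, HasDerivAt f (f' z) z)
    (hf' : ContinuousOn f' s) (ha : a ∈ s) (hx : x ∈ s) :
    dslope f a x = ∫ t in (0 : ℝ)..1, f' (a + t • (x - a)) := by
  rcases eq_or_ne x a with rfl | hne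
  · simp [(hf x hx).deriv]
  · rw [dslope_of_ne f hne, slope_def_module, inv_smul_eq_iff₀ (sub_ne_zero.2 hne),
      intervalIntegral.integral_unitInterval_deriv_eq_sub
        (continuousOn_comp_add_smul_sub hs hf' ha hx)
        fun t ht ↦ hf _ (hs.add_smul_sub_mem ha hx ht),
      add_sub_cancel]

theorem dslope_sub_dslope_eq_integral {a₁ a₂ x₁ x₂ : 𝕜} (hs : Convex ℝ s)
    (hf : ∀ z ∈ s, HasDerivAt f (f' z) z) (hf' : ContinuousOn f' s)
    (ha₁ : a₁ ∈ s) (hx₁ : x₁ ∈ s) (ha₂ : a₂ ∈ s) (hx₂ : x₂ ∈ s) :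
    dslope f a₁ x₁ - dslope f a₂ x₂ =
      ∫ t in (0 : ℝ)..1, (f' (a₁ + t • (x₁ - a₁)) - f' (a₂ + t • (x₂ - a₂))) := by
  rw [dslope_eq_integral hs hf hf' ha₁ hx₁, dslope_eq_integral hs hf hf' ha₂ hx₂,
    intervalIntegral.integral_sub]
  · exact (continuousOn_comp_add_smul_sub hs hf' ha₁ hx₁).intervalIntegrable_of_Icc zero_le_one
  · exact (continuousOn_comp_add_smul_sub hs hf' ha₂ hx₂).intervalIntegrable_of_Icc zero_le_one

theorem norm_dslope_sub_dslope_le (hs : Convex ℝ s) (hf : ∀ z ∈ s, HasDerivAt f (f' z) z)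
    (hf' : LipschitzOnWith K f' s) (ha : a ∈ s) (hb : b ∈ s) (hx : x ∈ s) :
    ‖dslope f a x - dslope f b x‖ ≤ K / 2 * ‖a - b‖ := by
  have integrand_le : ∀ t ∈ Set.Icc (0 : ℝ) 1,
      ‖f' (a + t • (x - a)) - f' (b + t • (x - b))‖ ≤ (1 - t) * (K * ‖a - b‖) := by
    intro t ht
    have hsub : a + t • (x - a) - (b + t • (x - b)) = (1 - t) • (a - b) := by module
    calc ‖f' (a + t • (x - a)) - f' (b + t • (x - b))‖
        ≤ K * ‖a + t • (x - a) - (b + t • (x - b))‖ :=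
          hf'.norm_sub_le (hs.add_smul_sub_mem ha hx ht) (hs.add_smul_sub_mem hb hx ht)
      _ = (1 - t) * (K * ‖a - b‖) := by
          rw [hsub, norm_smul, Real.norm_of_nonneg (sub_nonneg.2 ht.2), mul_left_comm]
  calc ‖dslope f a x - dslope f b x‖
      = ‖∫ t in (0 : ℝ)..1, (f' (a + t • (x - a)) - f' (b + t • (x - b)))‖ := by
        rw [dslope_sub_dslope_eq_integral hs hf hf'.continuousOn ha hx hb hx]
    _ ≤ ∫ t in (0 : ℝ)..1, (1 - t) * (K * ‖a - b‖) :=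
        intervalIntegral.norm_integral_le_of_norm_le zero_le_one
          (.of_forall fun t ht ↦ integrand_le t (Set.Ioc_subset_Icc_self ht))
          (Continuous.intervalIntegrable (by fun_prop) _ _)
    _ = K / 2 * ‖a - b‖ := by
        rw [intervalIntegral.integral_mul_const, intervalIntegral.integral_sub (by simp) (by simp),
          integral_one, integral_id]
        ring

end RCLike

section Real

variable {f f' g : ℝ → ℝ} {s t : Set ℝ} {a b x y c : ℝ} {K : ℝ≥0}

theorem monotoneOn_dslope_sub_mul (hs : Convex ℝ s) (hf : ∀ z ∈ s, HasDerivAt f (f' z) z)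
    (hf' : ContinuousOn f' s) (hmono : MonotoneOn (fun z ↦ f' z - c * z) s) (hb : b ∈ s) :
    MonotoneOn (fun z ↦ dslope f b z - c / 2 * z) s := by
  intro y hy x hx hyx
  have integrand_le : ∀ r ∈ Set.Icc (0 : ℝ) 1,
      r * (c * (x - y)) ≤ f' (b + r • (x - b)) - f' (b + r • (y - b)) := by
    intro r hr
    have hle : b + r • (y - b) ≤ b + r • (x - b) := by
      have hr0 : 0 ≤ r := hr.1
      gcongr
    have hmono_le := hmono (hs.add_smul_sub_mem hb hy hr) (hs.add_smul_sub_mem hb hx hr) hle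
    simp only [smul_eq_mul] at hmono_le ⊢
    linarith
  have hincr : c / 2 * (x - y) ≤ dslope f b x - dslope f b y :=
    calc c / 2 * (x - y) = ∫ r in (0 : ℝ)..1, r * (c * (x - y)) := by
          rw [intervalIntegral.integral_mul_const, integral_id]
          ring
      _ ≤ ∫ r in (0 : ℝ)..1, (f' (b + r • (x - b)) - f' (b + r • (y - b))) :=
          intervalIntegral.integral_mono_on zero_le_one
            (Continuous.intervalIntegrable (by fun_prop) _ _)
            (((continuousOn_comp_add_smul_sub hs hf' hb hx).sub
              (continuousOn_comp_add_smul_sub hs hf' hb hy)).intervalIntegrable_of_Icc zero_le_one)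
            integrand_le
      _ = dslope f b x - dslope f b y := by
          rw [dslope_sub_dslope_eq_integral hs hf hf' hb hx hb hy]
  linarith

theorem mul_sq_le_mul_sub_of_monotoneOn_sub_mul (hg : MonotoneOn (fun z ↦ g z - c * z) s)
    (hx : x ∈ s) (hy : y ∈ s) :
    c * (x - y) ^ 2 ≤ (x - y) * (g x - g y) := by
  have hnonneg : 0 ≤ (x - y) * ((g x - c * x) - (g y - c * y)) := by
    rcases le_total x y with h | h
    · exact mul_nonneg_of_nonpos_of_nonpos (sub_nonpos.2 h) (sub_nonpos.2 (hg hx hy h))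
    · exact mul_nonneg (sub_nonneg.2 h) (sub_nonneg.2 (hg hy hx h))
  linarith

theorem mul_sq_sub_mul_abs_le_mul_add {e p q k : ℝ} (hp : c * e ^ 2 ≤ e * p) (hq : |q| ≤ k) :
    c * e ^ 2 - k * |e| ≤ e * (p + q) := by
  have habs : |e * q| ≤ k * |e| := by
    rw [abs_mul, mul_comm]
    gcongr
  linarith [neg_abs_le (e * q)]

theorem mul_le_div_four_mul_sq_add_sq_div (hc : 0 < c) (u v : ℝ) :
    u * v ≤ c / 4 * u ^ 2 + v ^ 2 / c := by
  have hsq : c / 4 * u ^ 2 + v ^ 2 / c - u * v = (c * u / 2 - v) ^ 2 / c := by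
    field_simp
    ring
  have hsq_nonneg : 0 ≤ (c * u / 2 - v) ^ 2 / c := by positivity
  linarith

theorem sub_le_mul_dslope_sub_dslope (hs : Convex ℝ s) (ht : Convex ℝ t)
    (hf : ∀ z ∈ s ∪ t, HasDerivAt f (f' z) z) (hf' : ContinuousOn f' s)
    (hmono : MonotoneOn (fun z ↦ f' z - c * z) s) (hlip : LipschitzOnWith K f' t)
    (ha : a ∈ t) (hb : b ∈ s ∩ t) (hx : x ∈ s ∩ t) (hy : y ∈ s) :
    c / 2 * (x - y) ^ 2 - K / 2 * |a - b| * |x - y| ≤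
      (x - y) * (dslope f a x - dslope f b y) := by
  have hright : c / 2 * (x - y) ^ 2 ≤ (x - y) * (dslope f b x - dslope f b y) :=
    mul_sq_le_mul_sub_of_monotoneOn_sub_mul
      (monotoneOn_dslope_sub_mul hs (fun z hz ↦ hf z (.inl hz)) hf' hmono hb.1) hx.1 hy
  have hleft : |dslope f a x - dslope f b x| ≤ K / 2 * |a - b| :=
    norm_dslope_sub_dslope_le ht (fun z hz ↦ hf z (.inr hz)) hlip ha hb.2 hx.2
  convert! mul_sq_sub_mul_abs_le_mul_add hright hleft using 2
  ring

theorem sub_le_mul_sub_sub_sub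
    (hmono : MonotoneOn (fun z ↦ g z - c * z) s) (hlip : LipschitzOnWith K g t)
    (ha : a ∈ t) (hb : b ∈ t) (hx : x ∈ s) (hy : y ∈ s) :
    c * (x - y) ^ 2 - K * |a - b| * |x - y| ≤
      (x - y) * ((g x - g y) - (g a - g b)) := by
  have hle : |-(g a - g b)| ≤ K * |a - b| := by
    rw [abs_neg]
    exact hlip.norm_sub_le ha hb
  rw [sub_eq_add_neg (g x - g y)]
  exact mul_sq_sub_mul_abs_le_mul_add
    (mul_sq_le_mul_sub_of_monotoneOn_sub_mul hmono hx hy) hle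

theorem sub_le_mul_dslope_sub_dslope_add_mul {δ τ : ℝ}
    (hc : 0 < c) (hτ : 0 ≤ τ) (hτδ : τ ≤ δ) (hs : Convex ℝ s) (ht : Convex ℝ t)
    (hf : ∀ z ∈ s ∪ t, HasDerivAt f (f' z) z) (hf' : ContinuousOn f' s)
    (hmono : MonotoneOn (fun z ↦ f' z - c * z) s) (hlip : LipschitzOnWith K f' t)
    (ha : a ∈ t) (hb : b ∈ s ∩ t) (hx : x ∈ s ∩ t) (hy : y ∈ s) :
    c / 4 * (x - y) ^ 2 - ((1 / 2 + δ) * K) ^ 2 / c * (a - b) ^ 2 ≤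
      (x - y) * (dslope f a x - dslope f b y) +
        τ * ((x - y) * ((f' x - f' y) - (f' a - f' b))) := by
  have hquot := sub_le_mul_dslope_sub_dslope hs ht hf hf' hmono hlip ha hb hx hy
  have hderiv : -(δ * (K * |a - b| * |x - y|)) ≤
      τ * ((x - y) * ((f' x - f' y) - (f' a - f' b))) :=
    calc -(δ * (K * |a - b| * |x - y|)) ≤ -(τ * (K * |a - b| * |x - y|)) := by gcongr
      _ ≤ τ * (c * (x - y) ^ 2 - K * |a - b| * |x - y|) := by
          have hsq : 0 ≤ τ * (c * (x - y) ^ 2) := by positivity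
          linarith
      _ ≤ τ * ((x - y) * ((f' x - f' y) - (f' a - f' b))) :=
          mul_le_mul_of_nonneg_left
            (sub_le_mul_sub_sub_sub hmono hlip ha hb.2 hx.1 hy) hτ
  have hyoung := mul_le_div_four_mul_sq_add_sq_div hc |x - y| ((1 / 2 + δ) * K * |a - b|)
  rw [mul_pow _ |a - b|, sq_abs, sq_abs, mul_div_right_comm] at hyoung
  linarith

end Real

end DifferenceQuotient

section Log

open Real

theorem monotoneOn_log_sub_inv_mul (M : ℝ) :
    MonotoneOn (fun z ↦ log z - M⁻¹ * z) (Set.Ioc 0 M) := by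
  intro v hv u hu hvu
  have hlog : (u - v) / u ≤ log u - log v :=
    calc (u - v) / u = 1 - (u / v)⁻¹ := by rw [inv_div, one_sub_div hu.1.ne']
      _ ≤ log (u / v) := one_sub_inv_le_log_of_pos (div_pos hu.1 hv.1)
      _ = log u - log v := log_div hu.1.ne' hv.1.ne'
  have hdiv : (u - v) / M ≤ (u - v) / u :=
    div_le_div_of_nonneg_left (sub_nonneg.2 hvu) hu.1 hu.2
  have hsplit : (u - v) / M = M⁻¹ * u - M⁻¹ * v := by ring
  linarith

theorem lipschitzOnWith_log_Ici {m : ℝ} (hm : 0 < m) :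
    LipschitzOnWith m⁻¹.toNNReal log (Set.Ici m) := by
  refine (convex_Ici m).lipschitzOnWith_of_nnnorm_deriv_le
    (fun z hz ↦ differentiableAt_log (hm.trans_le hz).ne') fun z hz ↦ ?_
  rw [deriv_log, ← NNReal.coe_le_coe, coe_nnnorm, coe_toNNReal _ (by positivity), norm_inv,
    norm_of_nonneg (hm.le.trans hz)]
  exact inv_anti₀ hm hz

end Log

namespace PNP

theorem G1_eq_dslope {a : ℝ} (ha : a ≠ 0) (x : ℝ) :
    G1 a x = dslope (fun z ↦ z * Real.log z) a x := by
  unfold G1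
  split_ifs with h
  · rw [h, dslope_same, Real.deriv_mul_log ha]
  · rw [dslope_of_ne _ h, slope_def_field]

theorem sub_le_mul_G1_sub_G1_add_mul {m M δ τ a b x y : ℝ}
    (hm : 0 < m) (hτ : 0 ≤ τ) (hτδ : τ ≤ δ) (ha : m ≤ a) (hb : b ∈ Set.Icc m M)
    (hx : x ∈ Set.Icc m M) (hy : y ∈ Set.Ioc 0 M) :
    1 / (4 * M) * (x - y) ^ 2 - M * ((1 / 2 + δ) / m) ^ 2 * (a - b) ^ 2 ≤
      (x - y) * (G1 a x - G1 b y) +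
        τ * ((x - y) * ((Real.log x - Real.log y) - (Real.log a - Real.log b))) := by
  have hM : 0 < M := hy.1.trans_le hy.2
  have pos_of_mem : ∀ z ∈ Set.Ioc 0 M ∪ Set.Ici m, 0 < z := by
    rintro z (hz | hz)
    exacts [hz.1, hm.trans_le hz]
  have hmono : MonotoneOn (fun z ↦ Real.log z + 1 - M⁻¹ * z) (Set.Ioc 0 M) := by
    simpa only [add_sub_right_comm] using (monotoneOn_log_sub_inv_mul M).add_const 1
  have hlip : LipschitzOnWith m⁻¹.toNNReal (fun z ↦ Real.log z + 1) (Set.Ici m) := by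
    simpa only [LipschitzOnWith, edist_add_right] using lipschitzOnWith_log_Ici hm
  have hcont : ContinuousOn (fun z ↦ Real.log z + 1) (Set.Ioc 0 M) :=
    (Real.continuousOn_log.mono fun z hz ↦ hz.1.ne').add continuousOn_const
  have key := sub_le_mul_dslope_sub_dslope_add_mul (inv_pos.2 hM) hτ hτδ
    (convex_Ioc 0 M) (convex_Ici m) (fun z hz ↦ Real.hasDerivAt_mul_log (pos_of_mem z hz).ne')
    hcont hmono hlip ha ⟨⟨hm.trans_le hb.1, hb.2⟩, hb.1⟩ ⟨⟨hm.trans_le hx.1, hx.2⟩, hx.1⟩ hy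
  rw [G1_eq_dslope (hm.trans_le ha).ne', G1_eq_dslope (hm.trans_le hb.1).ne']
  rw [Real.coe_toNNReal _ (by positivity)] at key
  simp only [add_sub_add_right_eq_sub] at key
  convert! key using 2 <;> field_simp

section Grid

variable {N : ℕ} [NeZero N]

theorem l2_sq (f : GridIdx N → ℝ) : l2 N f ^ 2 = ip N f f :=
  Real.sq_sqrt <| mul_nonneg (by positivity) (Finset.sum_nonneg fun p _ ↦ mul_self_nonneg (f p))

theorem l2_sq_sub_l2_sq_le_ip_add_ip {A B τ : ℝ} {u v g r : GridIdx N → ℝ}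
    (h : ∀ p, A * u p ^ 2 - B * v p ^ 2 ≤ u p * g p + τ * (u p * r p)) :
    A * l2 N u ^ 2 - B * l2 N v ^ 2 ≤ ip N u g + τ * ip N u r := by
  have hsum := mul_le_mul_of_nonneg_left (Finset.sum_le_sum fun p (_ : p ∈ Finset.univ) ↦ h p)
    (by positivity : (0 : ℝ) ≤ (1 / N) ^ 3)
  simp only [Finset.sum_sub_distrib, Finset.sum_add_distrib, ← Finset.mul_sum, sq] at hsum
  simp only [l2_sq, ip]
  linarith

end Grid

end PNP

theorem stmt15_general {N : ℕ} [NeZero N] {m M δ τ : ℝ} (hm : 0 < m) (hτ : 0 ≤ τ) (hτδ : τ ≤ δ)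
    {Nh1 Nh0 n1 n0 : GridIdx N → ℝ} (hNh1 : ∀ p, Nh1 p ∈ Set.Icc m M) (hNh0 : ∀ p, m ≤ Nh0 p)
    (hn0 : ∀ p, n0 p ∈ Set.Icc m M) (hn1 : ∀ p, n1 p ∈ Set.Ioc 0 M) :
    1 / (4 * M) * l2 N (fun p ↦ Nh1 p - n1 p) ^ 2
        - M * ((1 / 2 + δ) / m) ^ 2 * l2 N (fun p ↦ Nh0 p - n0 p) ^ 2
      ≤ ip N (fun p ↦ Nh1 p - n1 p) (fun p ↦ G1 (Nh0 p) (Nh1 p) - G1 (n0 p) (n1 p))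
        + τ * ip N (fun p ↦ Nh1 p - n1 p)
            (fun p ↦ (Real.log (Nh1 p) - Real.log (n1 p))
              - (Real.log (Nh0 p) - Real.log (n0 p))) :=
  l2_sq_sub_l2_sq_le_ip_add_ip fun p ↦
    sub_le_mul_G1_sub_G1_add_mul hm hτ hτδ (hNh0 p) (hn0 p) (hNh1 p) (hn1 p)

/-- Improved bound control of the nonlinear inner products when the
numerical solution stays below `2C* + 1`. -/
theorem stmt15 (ε Cs : ℝ) (hε : 0 < ε) (hCs : 0 < Cs) :
    ∃ C4 C5 δ0 : ℝ, 0 < C4 ∧ 0 < C5 ∧ 0 < δ0 ∧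
      ∀ (N : ℕ) [NeZero N], ∀ dt : ℝ, 0 < dt → dt ≤ δ0 →
      ∀ Nh1 Nh0 n1 n0 : GridIdx N → ℝ,
        (∀ p, ε ≤ Nh1 p ∧ Nh1 p ≤ Cs) →
        (∀ p, ε ≤ Nh0 p ∧ Nh0 p ≤ Cs) →
        (∀ p, ε / 2 ≤ n0 p ∧ n0 p ≤ Cs + 1) →
        (∀ p, 0 < n1 p ∧ n1 p < 2 * Cs + 1) →
        linf N (fun p => Nh0 p - n0 p) ≤ dt ^ 2 →
        C5 * (l2 N (fun p => Nh1 p - n1 p)) ^ 2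
            - C4 * (l2 N (fun p => Nh0 p - n0 p)) ^ 2
          ≤ ip N (fun p => Nh1 p - n1 p) (fun p => G1 (Nh0 p) (Nh1 p) - G1 (n0 p) (n1 p))
            + dt * ip N (fun p => Nh1 p - n1 p)
                (fun p => (Real.log (Nh1 p) - Real.log (n1 p))
                  - (Real.log (Nh0 p) - Real.log (n0 p))) := by
  refine ⟨(2 * Cs + 1) * ((1 / 2 + 1) / (ε / 2)) ^ 2, 1 / (4 * (2 * Cs + 1)), 1, by positivity,
    by positivity, one_pos, fun N _ dt hdt hdt1 Nh1 Nh0 n1 n0 hNh1 hNh0 hn0 hn1 _ ↦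
    stmt15_general (half_pos hε) hdt.le hdt1 (fun p ↦ ?_) (fun p ↦ ?_) (fun p ↦ ?_) fun p ↦ ?_⟩
  · exact ⟨by linarith [hNh1 p], by linarith [hNh1 p]⟩
  · linarith [hNh0 p]
  · exact ⟨(hn0 p).1, by linarith [hn0 p]⟩
  · exact ⟨(hn1 p).1, (hn1 p).2.le⟩
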